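/- arXiv:math/0210042 — 2 statements merged into one kernel-verified Lean document; each statement's English description precedes it below -/
import Mathlib

section
/- Let R be a Noetherian regular local ring and M a nonzero finitely generated R-module. Then M is a free R-module if and only if the depth of M equals the Krull dimension of R. -/
/-!
Choose `x ∈ m \ m²` that is `M`-regular. Then `R/x` is regular of dimension one less,
`depth M/xM = depth M - 1` by the theorem of Rees, and `M` is free over `R` if and only if `M/xM` is
free over `R/x`, so the equivalence descends along `R → R/x` until `R` is a field. When `R` is not
a field, either side of the equivalence yields an `M`-regular element of `m`: a free module over
the domain `R` is torsion-free, and a module of depth `dim R > 0` has one by definition. As `m` is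
then neither contained in `m²` nor in an associated prime of `M`, prime avoidance moves this
element out of `m²`.
-/

open IsLocalRing RingTheory.Sequence

universe u v

section RegularSequence

variable {R M : Type*} [CommRing R] [AddCommGroup M] [Module R M]

lemma isRegular_of_isRegular_append {rs₁ rs₂ : List R} (h : IsRegular M (rs₁ ++ rs₂)) :
    IsRegular M rs₁ where
  toIsWeaklyRegular := ((isWeaklyRegular_append_iff M rs₁ rs₂).1 h.toIsWeaklyRegular).1
  top_ne_smul htop := h.top_ne_smul <| Eq.symm <| top_unique <| htop.trans_le <|
    Submodule.smul_mono_left <| (Ideal.ofList_append rs₁ rs₂).symm ▸ le_sup_left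

lemma length_le_ringKrullDim_of_isRegular [IsLocalRing R] [IsNoetherianRing R] [Module.Finite R M]
    {rs : List R} (hrs : IsRegular M rs) : (rs.length : WithBot ℕ∞) ≤ ringKrullDim R := by
  have := hrs.quot_ofList_smul_nontrivial ⊤
  have : Nonempty (Module.support R (M ⧸ Ideal.ofList rs • (⊤ : Submodule R M))) :=
    Module.nonempty_support_of_nontrivial.to_subtype
  calc (rs.length : WithBot ℕ∞)
    _ ≤ Module.supportDim R (M ⧸ Ideal.ofList rs • (⊤ : Submodule R M)) + rs.length :=
      le_add_of_nonneg_left Order.krullDim_nonneg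
    _ = Module.supportDim R M := Module.supportDim_add_length_eq_supportDim_of_isRegular rs hrs
    _ ≤ ringKrullDim R := Module.supportDim_le_ringKrullDim R M

end RegularSequence

section Depth

/-- The depth of a module `M` over a local ring `R`: the maximal length of an `M`-regular sequence
in the maximal ideal. As a supremum in `ℕ` it takes the junk value `0` when the set of lengths is
empty (as for `M = 0`) or unbounded. -/
noncomputable def localDepth (R M : Type*) [CommRing R] [IsLocalRing R] [AddCommGroup M]
    [Module R M] : ℕ :=
  sSup {n : ℕ | ∃ rs : List R, rs.length = n ∧ (∀ r ∈ rs, r ∈ maximalIdeal R) ∧ IsRegular M rs}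

lemma localDepth_congr {R M N : Type*} [CommRing R] [IsLocalRing R] [AddCommGroup M] [Module R M]
    [AddCommGroup N] [Module R N] (e : M ≃ₗ[R] N) : localDepth R M = localDepth R N := by
  simp only [localDepth, e.isRegular_congr]

lemma localDepth_eq_of_surjective_algebraMap {A B : Type*} (M : Type*) [CommRing A] [IsLocalRing A]
    [CommRing B] [IsLocalRing B] [Algebra A B] [AddCommGroup M] [Module A M] [Module B M]
    [IsScalarTower A B M] (hAB : Function.Surjective (algebraMap A B)) :
    localDepth B M = localDepth A M := by
  have hmem (r : A) : algebraMap A B r ∈ maximalIdeal B ↔ r ∈ maximalIdeal A := by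
    have := IsLocalHom.of_surjective (algebraMap A B) hAB
    simp only [mem_maximalIdeal, mem_nonunits_iff, isUnit_map_iff]
  have hreg (rs : List A) : IsRegular M (rs.map (algebraMap A B)) ↔ IsRegular M rs :=
    (AddEquiv.refl M).isRegular_congr <| List.forall₂_map_left_iff.2 <|
      List.forall₂_same.2 fun r _ ↦ algebraMap_smul B r
  simp only [localDepth, (List.map_surjective_iff.2 hAB).exists, List.length_map,
    List.forall_mem_map, hmem, hreg]

variable {R : Type u} [CommRing R] [IsLocalRing R] [IsNoetherianRing R]
  {M : Type v} [AddCommGroup M] [Module R M] [Module.Finite R M] [Nontrivial M]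

lemma le_localDepth_iff {n : ℕ} : n ≤ localDepth R M ↔
    ∃ rs : List R, rs.length = n ∧ (∀ r ∈ rs, r ∈ maximalIdeal R) ∧ IsRegular M rs := by
  have hbdd : BddAbove {n : ℕ | ∃ rs : List R, rs.length = n ∧
      (∀ r ∈ rs, r ∈ maximalIdeal R) ∧ IsRegular M rs} := by
    refine ⟨(maximalIdeal R).spanFinrank, ?_⟩
    rintro _ ⟨rs, rfl, -, hrs⟩
    exact_mod_cast (length_le_ringKrullDim_of_isRegular hrs).trans
      (ringKrullDim_le_spanFinrank_maximalIdeal R)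
  refine ⟨fun hn ↦ ?_, fun h ↦ le_csSup hbdd h⟩
  obtain ⟨rs, hlen, hmem, hrs⟩ :=
    Nat.sSup_mem (by exact ⟨0, [], rfl, by simp, IsRegular.nil R M⟩) hbdd
  refine ⟨rs.take n, List.length_take_of_le (hlen ▸ hn),
    fun r hr ↦ hmem r (List.mem_of_mem_take hr), ?_⟩
  exact isRegular_of_isRegular_append (rs₂ := rs.drop n) (by rwa [List.take_append_drop])

variable (R M) in
lemma localDepth_le_ringKrullDim : (localDepth R M : WithBot ℕ∞) ≤ ringKrullDim R := by
  obtain ⟨rs, hlen, -, hrs⟩ := le_localDepth_iff.1 (le_refl (localDepth R M))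
  exact hlen ▸ length_le_ringKrullDim_of_isRegular hrs

lemma exists_isSMulRegular_of_localDepth_pos (h : 0 < localDepth R M) :
    ∃ x ∈ maximalIdeal R, IsSMulRegular M x := by
  obtain ⟨rs, hlen, hmem, hrs⟩ := le_localDepth_iff.1 (Nat.succ_le_of_lt h)
  obtain ⟨x, rfl⟩ := List.length_eq_one_iff.1 hlen
  exact ⟨x, hmem x List.mem_cons_self, ((isRegular_cons_iff M x []).1 hrs).1⟩

open CategoryTheory Abelian in
lemma le_localDepth_iff_subsingleton_ext [Small.{v} R] {n : ℕ} :
    n ≤ localDepth R M ↔ ∀ i < n, Subsingleton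
      (Ext (ModuleCat.of R (Shrink.{v} (R ⧸ maximalIdeal R))) (ModuleCat.of R M) i) :=
  le_localDepth_iff.trans <| ((ModuleCat.exists_isRegular_tfae (maximalIdeal R) n
    (ModuleCat.of R M) (Submodule.top_ne_ideal_smul_of_le_jacobson_annihilator
      (maximalIdeal_le_jacobson _)).symm.lt_top).out 1 3).symm

lemma localDepth_quotSMulTop_add_one_le {x : R} (hx : x ∈ maximalIdeal R)
    (hreg : IsSMulRegular M x) : localDepth R (QuotSMulTop x M) + 1 ≤ localDepth R M := by
  have := nontrivial_quotSMulTop_of_mem_maximalIdeal M hx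
  obtain ⟨rs, hlen, hmem, hrs⟩ := le_localDepth_iff.1 (le_refl (localDepth R (QuotSMulTop x M)))
  exact le_localDepth_iff.2 ⟨x :: rs, by simp [hlen], by simpa using ⟨hx, hmem⟩, hrs.cons hreg⟩

open CategoryTheory Abelian in
lemma localDepth_le_localDepth_quotSMulTop_add_one [Small.{v} R] {x : R} (hx : x ∈ maximalIdeal R)
    (hreg : IsSMulRegular M x) : localDepth R M ≤ localDepth R (QuotSMulTop x M) + 1 := by
  have := nontrivial_quotSMulTop_of_mem_maximalIdeal M hx
  have hext := le_localDepth_iff_subsingleton_ext.1 (le_refl (localDepth R M))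
  rw [← Nat.sub_le_iff_le_add]
  refine le_localDepth_iff_subsingleton_ext.2 fun i hi ↦ ?_
  have hzero := AddCommGrpCat.isZero_of_iff_subsingleton.2 (hext i (by lia))
  have hzero_succ := AddCommGrpCat.isZero_of_iff_subsingleton.2 (hext (i + 1) (by lia))
  -- `Ext^i(k, M/xM)` sits between `Ext^i(k, M)` and `Ext^(i+1)(k, M)`, where `k = R/m`.
  have hexact := Ext.covariant_sequence_exact₃'
    (ModuleCat.of R (Shrink.{v} (R ⧸ maximalIdeal R)))
    (IsSMulRegular.smulShortComplex_shortExact (M := ModuleCat.of R M) hreg) i (i + 1) rfl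
  exact AddCommGrpCat.subsingleton_of_isZero <|
    hexact.isZero_of_both_zeros (hzero.eq_zero_of_src _) (hzero_succ.eq_zero_of_tgt _)

lemma localDepth_quotSMulTop_add_one {x : R} (hx : x ∈ maximalIdeal R)
    (hreg : IsSMulRegular M x) : localDepth R (QuotSMulTop x M) + 1 = localDepth R M := by
  refine (localDepth_quotSMulTop_add_one_le hx hreg).antisymm ?_
  -- The `Ext` groups exist only if `R` is small relative to the universe of the module.
  have e : ULift.{u} M ≃ₗ[R] M := ULift.moduleEquiv
  rw [← localDepth_congr e, ← localDepth_congr (QuotSMulTop.congr x e)]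
  exact localDepth_le_localDepth_quotSMulTop_add_one hx ((e.isSMulRegular_congr x).2 hreg)

lemma localDepth_quotient_quotSMulTop_add_one {x : R} [IsLocalRing (R ⧸ Ideal.span {x})]
    (hx : x ∈ maximalIdeal R) (hreg : IsSMulRegular M x) :
    localDepth (R ⧸ Ideal.span {x}) (QuotSMulTop x M) + 1 = localDepth R M := by
  rw [localDepth_eq_of_surjective_algebraMap _ Ideal.Quotient.mk_surjective,
    localDepth_quotSMulTop_add_one hx hreg]

end Depth

section PrimeAvoidance

variable {R : Type*} [CommRing R] {I J : Ideal R}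

lemma exists_mem_notMem_forall_notMem (hIJ : ¬ I ≤ J) {S : Set (Ideal R)} (hS : S.Finite)
    (hprime : ∀ p ∈ S, p.IsPrime) (hIS : ∀ p ∈ S, ¬ I ≤ p) :
    ∃ x ∈ I, x ∉ J ∧ ∀ p ∈ S, x ∉ p := by
  by_contra! hcover
  have hsub : (I : Set R) ⊆ ⋃ p ∈ insert J S, (p : Set R) := by
    intro x hx
    by_cases hxJ : x ∈ J
    · exact Set.mem_biUnion (Set.mem_insert J S) hxJ
    · obtain ⟨p, hp, hxp⟩ := hcover x hx hxJ
      exact Set.mem_biUnion (Set.mem_insert_of_mem J hp) hxp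
  obtain ⟨p, hp, hle⟩ := (Ideal.subset_union_prime_finite (f := id) (hS.insert J) J J
    fun p hp hpJ _ ↦ hprime p (hp.resolve_left hpJ)).1 hsub
  rcases hp with rfl | hp
  exacts [hIJ hle, hIS p hp hle]

lemma exists_mem_notMem_isSMulRegular [IsNoetherianRing R] (M : Type*) [AddCommGroup M]
    [Module R M] [Module.Finite R M] (hIJ : ¬ I ≤ J) (hI : ∃ r ∈ I, IsSMulRegular M r) :
    ∃ x ∈ I, x ∉ J ∧ IsSMulRegular M x := by
  have hunion := biUnion_associatedPrimes_eq_compl_regular R M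
  obtain ⟨r, hr, hreg⟩ := hI
  obtain ⟨x, hxI, hxJ, hx⟩ := exists_mem_notMem_forall_notMem hIJ (associatedPrimes.finite R M)
    (fun p hp ↦ hp.isPrime)
    fun p hp hle ↦ hunion.subset (Set.mem_biUnion hp (hle hr)) hreg
  refine ⟨x, hxI, hxJ, ?_⟩
  by_contra hnot
  obtain ⟨p, hp, hxp⟩ := Set.mem_iUnion₂.1 (hunion.superset hnot)
  exact hx p hp hxp

end PrimeAvoidance

section MinimalGenerators

lemma sInf_card_span_eq_spanFinrank {R M : Type*} [Semiring R] [AddCommMonoid M] [Module R M]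
    {N : Submodule R M} (hN : N.FG) :
    sInf {n : ℕ | ∃ s : Finset M, s.card = n ∧ Submodule.span R (s : Set M) = N} =
      N.spanFinrank := by
  have hmem := Submodule.FG.exists_span_finset_card_eq_spanFinrank hN
  refine le_antisymm (Nat.sInf_le hmem) (le_csInf ⟨_, hmem⟩ ?_)
  rintro _ ⟨s, rfl, rfl⟩
  simpa only [Set.ncard_coe_finset] using
    Submodule.spanFinrank_span_le_ncard_of_finite (R := R) s.finite_toSet

lemma span_insert_erase_eq {R M : Type*} [Ring R] [AddCommGroup M] [Module R M] [DecidableEq M]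
    {s : Finset M} {y : M} (hy : y ∈ s) {a : M → R} (hay : IsUnit (a y)) :
    Submodule.span R (insert (∑ z ∈ s, a z • z) (s.erase y : Set M)) = Submodule.span R s := by
  set x := ∑ z ∈ s, a z • z
  have hx_mem : x ∈ Submodule.span R (s : Set M) :=
    sum_mem fun z hz ↦ Submodule.smul_mem _ _ (Submodule.subset_span hz)
  have hz_mem {z : M} (hz : z ∈ s.erase y) :
      z ∈ Submodule.span R (insert x (s.erase y : Set M)) :=
    Submodule.subset_span (Set.mem_insert_of_mem _ hz)
  have hy_mem : y ∈ Submodule.span R (insert x (s.erase y : Set M)) := by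
    rw [← Submodule.smul_mem_iff_of_isUnit _ hay,
      eq_sub_of_add_eq (Finset.add_sum_erase s (fun z ↦ a z • z) hy)]
    exact sub_mem (Submodule.subset_span (Set.mem_insert _ _))
      (sum_mem fun z hz ↦ Submodule.smul_mem _ _ (hz_mem hz))
  refine le_antisymm (Submodule.span_le.2 ?_) (Submodule.span_le.2 fun z hz ↦ ?_)
  · exact Set.insert_subset hx_mem
      ((Finset.coe_subset.2 (s.erase_subset y)).trans Submodule.subset_span)
  · rcases eq_or_ne z y with rfl | hzy
    exacts [hy_mem, hz_mem (Finset.mem_erase.2 ⟨hzy, hz⟩)]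

lemma exists_span_insert_eq_of_notMem_smul {R M : Type*} [CommRing R] [IsLocalRing R]
    [AddCommGroup M] [Module R M] {N : Submodule R M} (hN : N.FG) {x : M} (hx : x ∈ N)
    (hx' : x ∉ maximalIdeal R • N) :
    ∃ t : Finset M, t.card + 1 = N.spanFinrank ∧ Submodule.span R (insert x (t : Set M)) = N := by
  classical
  obtain ⟨s, hcard, rfl⟩ := Submodule.FG.exists_span_finset_card_eq_spanFinrank hN
  obtain ⟨a, -, rfl⟩ := Submodule.mem_span_finset.1 hx
  obtain ⟨y, hy, hay⟩ : ∃ y ∈ s, a y ∉ maximalIdeal R := by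
    by_contra! h
    exact hx' <| sum_mem fun y hy ↦
      Submodule.smul_mem_smul (h y hy) (Submodule.subset_span hy)
  exact ⟨s.erase y, (Finset.card_erase_add_one hy).trans hcard,
    span_insert_erase_eq hy (notMem_maximalIdeal.1 hay)⟩

variable {R : Type*} [CommRing R] [IsLocalRing R]

lemma isLocalRing_quotient_span_singleton {x : R} (hx : x ∈ maximalIdeal R) :
    IsLocalRing (R ⧸ Ideal.span {x}) := by
  have hle : Ideal.span {x} ≤ maximalIdeal R := (Ideal.span_singleton_le_iff_mem _).2 hx
  have : Nontrivial (R ⧸ Ideal.span {x}) :=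
    Ideal.Quotient.nontrivial_iff.2 (ne_top_of_le_ne_top (maximalIdeal.isMaximal R).ne_top hle)
  exact .of_surjective' (Ideal.Quotient.mk _) Ideal.Quotient.mk_surjective

variable [IsNoetherianRing R]

lemma spanFinrank_maximalIdeal_eq_zero_iff_isField :
    (maximalIdeal R).spanFinrank = 0 ↔ IsField R := by
  rw [isField_iff_maximalIdeal_eq,
    Submodule.spanFinrank_eq_zero_iff_eq_bot (maximalIdeal R).fg_of_isNoetherianRing]

lemma spanFinrank_maximalIdeal_quotient_add_one_le {x : R} [IsLocalRing (R ⧸ Ideal.span {x})]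
    (hx : x ∈ maximalIdeal R) (hx' : x ∉ maximalIdeal R ^ 2) :
    (maximalIdeal (R ⧸ Ideal.span {x})).spanFinrank + 1 ≤ (maximalIdeal R).spanFinrank := by
  classical
  obtain ⟨t, hcard, hspan⟩ := exists_span_insert_eq_of_notMem_smul
    (maximalIdeal R).fg_of_isNoetherianRing hx (by rwa [smul_eq_mul, ← sq])
  have hmap : maximalIdeal (R ⧸ Ideal.span {x}) =
      Ideal.span (t.image (Ideal.Quotient.mk (Ideal.span {x})) : Set (R ⧸ Ideal.span {x})) := by
    rw [← map_maximalIdeal_of_surjective _ Ideal.Quotient.mk_surjective, ← hspan, ← Ideal.span,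
      Ideal.map_span, Set.image_insert_eq, Ideal.Quotient.mk_singleton_self,
      Ideal.span_insert_zero, Finset.coe_image]
  rw [← hcard, Nat.add_le_add_iff_right, hmap]
  exact (Submodule.spanFinrank_span_le_ncard_of_finite (Finset.finite_toSet _)).trans <|
    (Set.ncard_coe_finset _).trans_le Finset.card_image_le

end MinimalGenerators

section RegularLocalRing

lemma isDomain_of_isPrime_span_singleton {R : Type*} [CommRing R] [IsLocalRing R]
    [IsNoetherianRing R] {x : R} (hx : x ∈ maximalIdeal R) (hprime : (Ideal.span {x}).IsPrime)
    (hmin : ∀ p ∈ minimalPrimes R, x ∉ p) : IsDomain R := by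
  obtain ⟨q, hq, hqx⟩ := Ideal.exists_minimalPrimes_le (bot_le : ⊥ ≤ Ideal.span {x})
  have hq_prime : q.IsPrime := hq.1.1
  have hq_le : q ≤ maximalIdeal R • q := by
    intro y hy
    obtain ⟨a, rfl⟩ := Ideal.mem_span_singleton'.1 (hqx hy)
    rw [mul_comm]
    exact Submodule.smul_mem_smul hx ((hq_prime.mem_or_mem hy).resolve_right (hmin q hq))
  have hq_bot : q = ⊥ := Submodule.eq_bot_of_le_smul_of_le_jacobson_bot _ q
    q.fg_of_isNoetherianRing hq_le (maximalIdeal_le_jacobson _)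
  have : (⊥ : Ideal R).IsPrime := hq_bot ▸ hq_prime
  exact .of_bot_isPrime R

variable {R : Type*} [CommRing R] [IsRegularLocalRing R]

variable (R) in
lemma height_maximalIdeal_eq_spanFinrank :
    (maximalIdeal R).height = (maximalIdeal R).spanFinrank := by
  have h := maximalIdeal_height_eq_ringKrullDim (R := R)
  rw [← IsRegularLocalRing.spanFinrank_maximalIdeal] at h
  exact_mod_cast h

lemma maximalIdeal_notMem_minimalPrimes (hR : ¬ IsField R) :
    maximalIdeal R ∉ minimalPrimes R := by
  intro hmin
  have hheight := height_maximalIdeal_eq_spanFinrank R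
  rw [Ideal.height_eq_zero_iff.2 hmin, eq_comm, Nat.cast_eq_zero] at hheight
  exact hR (spanFinrank_maximalIdeal_eq_zero_iff_isField.1 hheight)

lemma spanFinrank_maximalIdeal_le_ringKrullDim_quotient_add_one {x : R}
    (hx : x ∈ maximalIdeal R) :
    ((maximalIdeal R).spanFinrank : WithBot ℕ∞) ≤ ringKrullDim (R ⧸ Ideal.span {x}) + 1 := by
  have h := Ideal.height_le_ringKrullDim_quotient_add_one hx
  rwa [height_maximalIdeal_eq_spanFinrank] at h

lemma isRegularLocalRing_quotient_span_singleton {x : R} (hx : x ∈ maximalIdeal R)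
    (hx' : x ∉ maximalIdeal R ^ 2) : IsRegularLocalRing (R ⧸ Ideal.span {x}) := by
  have := isLocalRing_quotient_span_singleton hx
  refine .of_spanFinrank_maximalIdeal_le _ (ENat.WithBot.add_le_add_one_right_iff.1 ?_)
  calc ((maximalIdeal (R ⧸ Ideal.span {x})).spanFinrank + 1 : WithBot ℕ∞)
    _ ≤ (maximalIdeal R).spanFinrank :=
      mod_cast spanFinrank_maximalIdeal_quotient_add_one_le hx hx'
    _ ≤ ringKrullDim (R ⧸ Ideal.span {x}) + 1 :=
      spanFinrank_maximalIdeal_le_ringKrullDim_quotient_add_one hx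

lemma spanFinrank_maximalIdeal_quotient_add_one {x : R} [IsRegularLocalRing (R ⧸ Ideal.span {x})]
    (hx : x ∈ maximalIdeal R) (hx' : x ∉ maximalIdeal R ^ 2) :
    (maximalIdeal (R ⧸ Ideal.span {x})).spanFinrank + 1 = (maximalIdeal R).spanFinrank := by
  refine (spanFinrank_maximalIdeal_quotient_add_one_le hx hx').antisymm ?_
  have h := spanFinrank_maximalIdeal_le_ringKrullDim_quotient_add_one hx
  rw [← IsRegularLocalRing.spanFinrank_maximalIdeal] at h
  exact_mod_cast h

lemma isDomain_of_isRegularLocalRing (R : Type*) [CommRing R] [IsRegularLocalRing R] :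
    IsDomain R := by
  induction hd : (maximalIdeal R).spanFinrank generalizing R with
  | zero => exact (spanFinrank_maximalIdeal_eq_zero_iff_isField.1 hd).isDomain
  | succ d ih =>
    have hR : ¬ IsField R := by rw [← spanFinrank_maximalIdeal_eq_zero_iff_isField]; lia
    obtain ⟨x, hx, hx', hmin⟩ := exists_mem_notMem_forall_notMem
      ((maximalIdeal_sq_lt_maximalIdeal R).2 hR).not_ge
      (minimalPrimes.finite_of_isNoetherianRing R) (fun p hp ↦ hp.1.1) fun p hp hle ↦ by
        have heq := (maximalIdeal.isMaximal R).eq_of_le hp.1.1.ne_top hle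
        exact maximalIdeal_notMem_minimalPrimes hR (heq ▸ hp)
    have := isRegularLocalRing_quotient_span_singleton hx hx'
    have hrank := spanFinrank_maximalIdeal_quotient_add_one hx hx'
    have hdom := ih (R ⧸ Ideal.span {x}) (by lia)
    exact isDomain_of_isPrime_span_singleton hx ((Ideal.Quotient.isDomain_iff_prime _).1 hdom) hmin

end RegularLocalRing

lemma exists_mem_isSMulRegular_of_ne_bot {R : Type*} (M : Type*) [CommRing R] [IsDomain R]
    [AddCommGroup M] [Module R M] [Module.IsTorsionFree R M] {I : Ideal R} (hI : I ≠ ⊥) :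
    ∃ x ∈ I, IsSMulRegular M x :=
  let ⟨x, hx, hx₀⟩ := Submodule.exists_mem_ne_zero_of_ne_bot hI
  ⟨x, hx, .of_ne_zero hx₀⟩

theorem free_iff_localDepth_eq_spanFinrank_maximalIdeal (R M : Type*) [CommRing R]
    [IsRegularLocalRing R] [AddCommGroup M] [Module R M] [Module.Finite R M] [Nontrivial M] :
    Module.Free R M ↔ localDepth R M = (maximalIdeal R).spanFinrank := by
  induction hd : (maximalIdeal R).spanFinrank generalizing R M with
  | zero =>
    let := (spanFinrank_maximalIdeal_eq_zero_iff_isField.1 hd).toField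
    have hdepth := localDepth_le_ringKrullDim R M
    rw [← IsRegularLocalRing.spanFinrank_maximalIdeal, hd] at hdepth
    exact iff_of_true (Module.Free.of_divisionRing R M) (Nat.le_zero.1 (mod_cast hdepth))
  | succ d ih =>
    have hR : ¬ IsField R := by rw [← spanFinrank_maximalIdeal_eq_zero_iff_isField]; lia
    have hsq := ((maximalIdeal_sq_lt_maximalIdeal R).2 hR).not_ge
    have descend {x : R} (hx : x ∈ maximalIdeal R) (hx' : x ∉ maximalIdeal R ^ 2)
        (hreg : IsSMulRegular M x) : Module.Free R M ↔ localDepth R M = d + 1 := by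
      have := isRegularLocalRing_quotient_span_singleton hx hx'
      have hrank := spanFinrank_maximalIdeal_quotient_add_one hx hx'
      have := nontrivial_quotSMulTop_of_mem_maximalIdeal M hx
      have : Module.Finite (R ⧸ Ideal.span {x}) (QuotSMulTop x M) :=
        .of_restrictScalars_finite R _ _
      have := Module.finitePresentation_of_finite R M
      rw [← Module.free_quotSMulTop_iff_free R M (maximalIdeal_le_jacobson _ hx) hreg,
        ih (R ⧸ Ideal.span {x}) (QuotSMulTop x M) (by lia),
        ← localDepth_quotient_quotSMulTop_add_one hx hreg, Nat.add_right_cancel_iff]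
    constructor
    · intro hfree
      have := isDomain_of_isRegularLocalRing R
      obtain ⟨x, hx, hx', hreg⟩ := exists_mem_notMem_isSMulRegular M hsq
        (exists_mem_isSMulRegular_of_ne_bot M (mt isField_iff_maximalIdeal_eq.2 hR))
      exact (descend hx hx' hreg).1 hfree
    · intro hdepth
      obtain ⟨x, hx, hx', hreg⟩ := exists_mem_notMem_isSMulRegular M hsq
        (exists_isSMulRegular_of_localDepth_pos (by lia))
      exact (descend hx hx' hreg).2 hdepth

open IsLocalRing RingTheory.Sequence in
/-- Over a Noetherian regular local ring `R` (regularity being expressed by the fact that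
the minimal number of generators of the maximal ideal equals the Krull dimension of `R`),
a nonzero finitely generated module `M` is free if and only if its depth (the maximal
length of an `M`-regular sequence contained in the maximal ideal) equals the Krull
dimension of `R`. -/
theorem stmt2 {R : Type*} [CommRing R] [IsLocalRing R] [IsNoetherianRing R]
    (hreg : (↑(sInf {n : ℕ | ∃ s : Finset R,
        s.card = n ∧ Ideal.span (s : Set R) = maximalIdeal R}) : WithBot (WithTop ℕ)) =
      ringKrullDim R)
    (M : Type*) [AddCommGroup M] [Module R M] [Module.Finite R M] [Nontrivial M] :
    Module.Free R M ↔
      (↑(sSup {n : ℕ | ∃ rs : List R, rs.length = n ∧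
          (∀ r ∈ rs, r ∈ maximalIdeal R) ∧ IsRegular M rs}) : WithBot (WithTop ℕ)) =
        ringKrullDim R := by
  have : IsRegularLocalRing R := by
    rw [isRegularLocalRing_iff,
      ← sInf_card_span_eq_spanFinrank (maximalIdeal R).fg_of_isNoetherianRing]
    exact hreg
  rw [← IsRegularLocalRing.spanFinrank_maximalIdeal]
  exact (free_iff_localDepth_eq_spanFinrank_maximalIdeal R M).trans
    (Nat.cast_inj (R := WithBot ℕ∞)).symm
end

section
/- Let k be a field, n ≥ 1, and S = k[z₀,…,zₙ,x,y] the polynomial ring over k in the variables z₀,…,zₙ,x,y. Let ν ≥ 1, let G ∈ k[z₀,…,zₙ] be a nonzero polynomial in the variables z₀,…,zₙ only, and let G₀ ∈ k[z₀,…,zₙ] be an irreducible polynomial dividing G. Set J = (G·y, x^{ν+1}, x·y, y²) ⊆ S. Then the prime ideal (x, y, G₀) is an associated prime of the S-module S/J, and it strictly contains the prime ideal (x, y); in particular (x, y, G₀) is an embedded associated prime of J, so S/J has an embedded component. -/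
/-!
Write `x = X (Sum.inr 0)` and `y = X (Sum.inr 1)`. Differentiating with respect to `y` sends each
generator of `J = (G y, x ^ (ν + 1), x y, y ^ 2)` into `(x, y, G)`. Since `J ⊆ (x, y, G)`, it
follows that `p y ∈ J` forces `p + y ∂p/∂y ∈ (x, y, G)`, and hence `J : y = (x, y, G)`. Writing
`G = G₀ H`, the class of `H y` in `S ⧸ J` therefore has annihilator `(x, y, G₀ H) : H`, which
equals `(x, y, G₀)` because membership in `(x, y, g)` is divisibility by `g` after setting
`x = y = 0`.
-/

section Colon

variable {A M : Type*} [CommRing A] [AddCommGroup M] [Module A M]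

theorem bot_colon_singleton_mkQ (N : Submodule A M) (m : M) :
    (⊥ : Submodule A (M ⧸ N)).colon {N.mkQ m} = N.colon {m} := by
  ext a
  rw [Submodule.mem_colon_singleton, Submodule.mem_colon_singleton, ← map_smul, Submodule.mem_bot,
    Submodule.mkQ_apply, Submodule.Quotient.mk_eq_zero]

theorem mem_associatedPrimes_quotient_of_eq_colon {N : Submodule A M} {P : Ideal A}
    (hP : P.IsPrime) {m : M} (hPm : P = N.colon {m}) : P ∈ associatedPrimes A (M ⧸ N) :=
  ⟨hP, N.mkQ m, by rw [bot_colon_singleton_mkQ, ← hPm, hP.radical]⟩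

theorem mem_colon_singleton_mul_iff {A : Type*} [CommSemiring A] {I : Ideal A} {a b c : A} :
    a ∈ I.colon {b * c} ↔ a * b ∈ I.colon {c} := by
  simp only [Submodule.mem_colon_singleton, smul_eq_mul, mul_assoc]

theorem derivation_apply_mem_of_mem_span {R A : Type*} [CommSemiring R] [CommSemiring A]
    [Algebra R A] (D : Derivation R A A) {s : Set A} {I : Ideal A} (hs : s ⊆ I)
    (hD : ∀ a ∈ s, D a ∈ I) {a : A} (ha : a ∈ Ideal.span s) : D a ∈ I := by
  induction ha using Submodule.span_induction with
  | mem a ha => exact hD a ha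
  | zero => simp
  | add a b _ _ iha ihb => simpa only [map_add] using I.add_mem iha ihb
  | smul b a ha iha =>
    rw [smul_eq_mul, D.leibniz]
    exact I.add_mem (I.mul_mem_left b iha) (I.mul_mem_right _ (Ideal.span_le.2 hs ha))

theorem colon_singleton_eq_span_of_derivation {R : Type*} [CommSemiring R] [Algebra R A]
    (D : Derivation R A A) {x y : A} (hx : D x = 0) (hy : D y = 1) (g : A) (ν : ℕ) :
    (Ideal.span {g * y, x ^ (ν + 1), x * y, y ^ 2}).colon {y} = Ideal.span {x, y, g} := by
  set I := Ideal.span {x, y, g}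
  have hxI : x ∈ I := Ideal.subset_span (by simp)
  have hyI : y ∈ I := Ideal.subset_span (by simp)
  have hgI : g ∈ I := Ideal.subset_span (by simp)
  apply le_antisymm
  · intro p hp
    have hDp : D (p * y) ∈ I := by
      refine derivation_apply_mem_of_mem_span D ?_ ?_ (Submodule.mem_colon_singleton.1 hp)
      · rintro _ (rfl | rfl | rfl | rfl)
        exacts [I.mul_mem_left _ hyI, I.pow_mem_of_mem hxI _ ν.succ_pos, I.mul_mem_left _ hyI,
          I.pow_mem_of_mem hyI _ two_pos]
      · rintro _ (rfl | rfl | rfl | rfl)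
        · simpa [hy] using I.add_mem hgI (I.mul_mem_right (D g) hyI)
        · simp [D.leibniz_pow, hx]
        · simpa [hx, hy] using hxI
        · simpa [D.leibniz_pow, hy] using I.mul_mem_left 2 hyI
    have hleibniz : D (p * y) = p + y * D p := by simp [hy]
    rw [hleibniz] at hDp
    exact (I.add_mem_iff_left (I.mul_mem_right _ hyI)).1 hDp
  · rw [Ideal.span_le]
    rintro _ (rfl | rfl | rfl) <;> rw [SetLike.mem_coe, Submodule.mem_colon_singleton, smul_eq_mul]
    · exact Ideal.subset_span (by simp)
    · exact Ideal.subset_span (by simp [sq])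
    · exact Ideal.subset_span (by simp)

end Colon

section KillCompl

open MvPolynomial

theorem killCompl_surjective {R σ τ : Type*} [CommSemiring R] {f : σ → τ}
    (hf : Function.Injective f) :
    Function.Surjective (killCompl hf : MvPolynomial τ R →ₐ[R] MvPolynomial σ R) :=
  fun p ↦ ⟨rename f p, killCompl_rename_app hf p⟩

theorem ker_killCompl {R σ τ : Type*} [CommSemiring R] {f : σ → τ} (hf : Function.Injective f) :
    RingHom.ker (killCompl hf : MvPolynomial τ R →ₐ[R] MvPolynomial σ R) =
      Ideal.span (X '' (Set.range f)ᶜ) := by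
  ext p
  rw [RingHom.mem_ker, mem_ideal_span_X_image]
  constructor
  · intro hp m hm
    by_contra! h
    have hm_range : ↑m.support ⊆ Set.range f := fun i hi ↦ by
      by_contra hi'
      exact Finsupp.mem_support_iff.1 hi (h i hi')
    rw [mem_support_iff, ← m.mapDomain_comapDomain f hf hm_range, ← coeff_killCompl hf, hp] at hm
    exact hm (coeff_zero _)
  · intro hp
    ext m
    rw [coeff_killCompl, coeff_zero]
    by_contra hm
    obtain ⟨i, hi, hmi⟩ := hp _ (mem_support_iff.2 hm)
    exact hmi (Finsupp.mapDomain_of_notMem_range m i hi)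

theorem comap_killCompl {R σ τ : Type*} [CommRing R] {f : σ → τ} (hf : Function.Injective f)
    (I : Ideal (MvPolynomial σ R)) :
    I.comap (killCompl hf) = I.map (rename f) ⊔ Ideal.span (X '' (Set.range f)ᶜ) := by
  have hI : (I.map (rename f)).map (killCompl hf) = I := by
    rw [Ideal.map_mapₐ, killCompl_comp_rename]
    exact Ideal.map_id I
  calc I.comap (killCompl hf)
      = ((I.map (rename f)).map (killCompl hf)).comap (killCompl hf) := by rw [hI]
    _ = I.map (rename f) ⊔ RingHom.ker (killCompl hf : MvPolynomial τ R →ₐ[R] _) :=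
      Ideal.comap_map_of_surjective (killCompl hf : MvPolynomial τ R →ₐ[R] _)
        (killCompl_surjective hf) _
    _ = I.map (rename f) ⊔ Ideal.span (X '' (Set.range f)ᶜ) := by rw [ker_killCompl]

end KillCompl

section TwoExtraVariables

open MvPolynomial

variable {R σ : Type*}

theorem image_X_compl_range_inl [CommSemiring R] :
    (X '' (Set.range Sum.inl)ᶜ : Set (MvPolynomial (σ ⊕ Fin 2) R)) =
      {X (Sum.inr 0), X (Sum.inr 1)} := by
  ext p
  simp [Set.compl_range_inl, Fin.exists_fin_two, eq_comm]

variable [CommRing R]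

theorem span_X_inr_eq_comap_bot :
    Ideal.span {X (Sum.inr 0), X (Sum.inr 1)} =
      (⊥ : Ideal (MvPolynomial σ R)).comap
        (killCompl (Sum.inl_injective (α := σ) (β := Fin 2))) := by
  rw [comap_killCompl, image_X_compl_range_inl, Ideal.map_bot, bot_sup_eq]

theorem span_X_inr_rename_eq_comap (g : MvPolynomial σ R) :
    Ideal.span {X (Sum.inr 0), X (Sum.inr 1), rename Sum.inl g} =
      (Ideal.span {g}).comap (killCompl (Sum.inl_injective (α := σ) (β := Fin 2))) := by
  rw [comap_killCompl, image_X_compl_range_inl, Ideal.map_span, Set.image_singleton,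
    ← Ideal.span_union, Set.union_comm, Set.insert_union, Set.singleton_union]

theorem mem_span_X_inr_rename_iff {g : MvPolynomial σ R} {p : MvPolynomial (σ ⊕ Fin 2) R} :
    p ∈ Ideal.span {X (Sum.inr 0), X (Sum.inr 1), rename Sum.inl g} ↔
      g ∣ killCompl Sum.inl_injective p := by
  rw [span_X_inr_rename_eq_comap, Ideal.mem_comap, Ideal.mem_span_singleton]

theorem isPrime_span_X_inr_rename {g : MvPolynomial σ R} (hg : Prime g) :
    (Ideal.span {(X (Sum.inr 0) : MvPolynomial (σ ⊕ Fin 2) R), X (Sum.inr 1),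
      rename Sum.inl g}).IsPrime := by
  have : (Ideal.span {g}).IsPrime := (Ideal.span_singleton_prime hg.ne_zero).2 hg
  rw [span_X_inr_rename_eq_comap]
  exact Ideal.IsPrime.comap _

theorem span_X_inr_lt_span_X_inr_rename {g : MvPolynomial σ R} (hg : g ≠ 0) :
    Ideal.span {(X (Sum.inr 0) : MvPolynomial (σ ⊕ Fin 2) R), X (Sum.inr 1)} <
      Ideal.span {X (Sum.inr 0), X (Sum.inr 1), rename Sum.inl g} := by
  have hbot : ⊥ < Ideal.span {g} := bot_lt_iff_ne_bot.2 (mt Ideal.span_singleton_eq_bot.1 hg)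
  have hcomap := Ideal.comap_injective_of_surjective _
    (killCompl_surjective (R := R) (Sum.inl_injective (α := σ) (β := Fin 2)))
  rw [span_X_inr_eq_comap_bot, span_X_inr_rename_eq_comap]
  exact (Ideal.comap_mono hbot.le).lt_of_ne (hcomap.ne hbot.ne)

theorem colon_rename_mul_X_inr_one (g : MvPolynomial σ R) {h : MvPolynomial σ R}
    (hh : h ∈ nonZeroDivisors (MvPolynomial σ R)) (ν : ℕ) :
    (Ideal.span {rename Sum.inl (g * h) * X (Sum.inr 1),
        (X (Sum.inr 0) : MvPolynomial (σ ⊕ Fin 2) R) ^ (ν + 1), X (Sum.inr 0) * X (Sum.inr 1),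
        X (Sum.inr 1) ^ 2}).colon {rename Sum.inl h * X (Sum.inr 1)} =
      Ideal.span {X (Sum.inr 0), X (Sum.inr 1), rename Sum.inl g} := by
  ext p
  rw [mem_colon_singleton_mul_iff,
    colon_singleton_eq_span_of_derivation (pderiv (Sum.inr 1)) (pderiv_X_of_ne (by simp))
      (pderiv_X_self _)]
  calc p * rename Sum.inl h ∈ Ideal.span {X (Sum.inr 0), X (Sum.inr 1), rename Sum.inl (g * h)}
    _ ↔ g * h ∣ killCompl Sum.inl_injective p * h := by
      rw [mem_span_X_inr_rename_iff, map_mul, killCompl_rename_app]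
    _ ↔ g ∣ killCompl Sum.inl_injective p := dvd_cancel_right_mem_nonZeroDivisors hh
    _ ↔ p ∈ Ideal.span {X (Sum.inr 0), X (Sum.inr 1), rename Sum.inl g} :=
      mem_span_X_inr_rename_iff.symm

theorem stmt4_general {g₀ g : MvPolynomial σ R} (hg : g ∈ nonZeroDivisors (MvPolynomial σ R))
    (hg₀ : Prime g₀) (hdvd : g₀ ∣ g) (ν : ℕ) :
    Ideal.span {(X (Sum.inr 0) : MvPolynomial (σ ⊕ Fin 2) R), X (Sum.inr 1),
          rename Sum.inl g₀} ∈
        associatedPrimes (MvPolynomial (σ ⊕ Fin 2) R)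
          (MvPolynomial (σ ⊕ Fin 2) R ⧸
            Ideal.span {rename Sum.inl g * X (Sum.inr 1),
              (X (Sum.inr 0) : MvPolynomial (σ ⊕ Fin 2) R) ^ (ν + 1),
              X (Sum.inr 0) * X (Sum.inr 1),
              X (Sum.inr 1) ^ 2}) ∧
      Ideal.span {(X (Sum.inr 0) : MvPolynomial (σ ⊕ Fin 2) R), X (Sum.inr 1)} <
        Ideal.span {X (Sum.inr 0), X (Sum.inr 1), rename Sum.inl g₀} := by
  obtain ⟨h, rfl⟩ := hdvd
  have hh : h ∈ nonZeroDivisors (MvPolynomial σ R) := (mul_mem_nonZeroDivisors.1 hg).2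
  exact ⟨mem_associatedPrimes_quotient_of_eq_colon (isPrime_span_X_inr_rename hg₀)
      (colon_rename_mul_X_inr_one g₀ hh ν).symm,
    span_X_inr_lt_span_X_inr_rename hg₀.ne_zero⟩

end TwoExtraVariables

open MvPolynomial in
/-- In `S = k[z₀,…,zₙ,x,y]`, with `G ≠ 0` a polynomial in the `z`-variables only, `G₀` an
irreducible polynomial in the `z`-variables dividing `G`, and `ν ≥ 1`, the prime
`(x, y, G₀)` is an associated prime of `S/(G·y, x^(ν+1), x·y, y²)` strictly
containing `(x, y)`; hence it is an embedded associated prime. -/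
theorem stmt4 {k : Type*} [Field k] (n : ℕ) (hn : 1 ≤ n) (ν : ℕ) (hν : 1 ≤ ν)
    (G₀' G : MvPolynomial (Fin (n + 1)) k) (hG : G ≠ 0)
    (hirr : Irreducible G₀') (hdvd : G₀' ∣ G) :
    (Ideal.span {(X (Sum.inr 0) : MvPolynomial (Fin (n + 1) ⊕ Fin 2) k),
          X (Sum.inr 1), rename Sum.inl G₀'}) ∈
        associatedPrimes (MvPolynomial (Fin (n + 1) ⊕ Fin 2) k)
          (MvPolynomial (Fin (n + 1) ⊕ Fin 2) k ⧸
            (Ideal.span {(rename Sum.inl G) * X (Sum.inr 1),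
              (X (Sum.inr 0) : MvPolynomial (Fin (n + 1) ⊕ Fin 2) k) ^ (ν + 1),
              X (Sum.inr 0) * X (Sum.inr 1),
              X (Sum.inr 1) ^ 2})) ∧
      Ideal.span {(X (Sum.inr 0) : MvPolynomial (Fin (n + 1) ⊕ Fin 2) k), X (Sum.inr 1)} <
        Ideal.span {(X (Sum.inr 0) : MvPolynomial (Fin (n + 1) ⊕ Fin 2) k),
          X (Sum.inr 1), rename Sum.inl G₀'} := by
  exact stmt4_general (mem_nonZeroDivisors_of_ne_zero hG) hirr.prime hdvd ν
end
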